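/- Let a > 0 be real and b ∈ ℂ with Re(b) ≥ 0, and define φ(w) = a·w + b and ψ(w) = a⁻¹·w + a⁻¹·conj(b). Then the identity 1/(φ(w) + 1) = a⁻¹ · 1/(ψ(w) + 1) holds for all w with Re(w) > 0 if and only if a = 1, Im(b) = 0 and b ≥ 0. (This is the reduction, via the kernel k₁, characterizing self-adjointness of C_φ on H²(ℂ₊).) -/

import Mathlib

open Complex

/-!
Inversion is injective, so the kernel identity says that the affine functions `w ↦ a * w + (b + 1)`
and `w ↦ w + (conj b + a)` agree on the half-plane. Two points determine the coefficients of an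
affine function, which leaves `a = 1` and `conj b = b`.
-/

theorem forall_mem_affine_eq_iff {R : Type*} [Ring R] [NoZeroDivisors R] {S : Set R}
    (hS : S.Nontrivial) {a b c d : R} :
    (∀ w ∈ S, a * w + b = c * w + d) ↔ a = c ∧ b = d := by
  refine ⟨fun h ↦ ?_, fun ⟨hac, hbd⟩ w _ ↦ by rw [hac, hbd]⟩
  obtain ⟨x, hx, y, hy, hxy⟩ := hS
  have slope : a = c := by
    refine mul_right_cancel₀ (sub_ne_zero.2 hxy) ?_
    calc a * (x - y) = (a * x + b) - (a * y + b) := by rw [mul_sub, add_sub_add_right_eq_sub]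
      _ = (c * x + d) - (c * y + d) := by rw [h x hx, h y hy]
      _ = c * (x - y) := by rw [mul_sub, add_sub_add_right_eq_sub]
  exact ⟨slope, add_left_cancel (slope ▸ h x hx)⟩

-- With the convention `0⁻¹ = 0`, inversion is injective on all of `G₀`, zero included.
theorem one_div_eq_inv_mul_one_div_iff {G₀ : Type*} [CommGroupWithZero G₀] {a x y : G₀} :
    1 / x = a⁻¹ * (1 / y) ↔ x = a * y := by
  rw [one_div, one_div, ← mul_inv, inv_inj]

theorem selfadjoint_kernel_reduction_general {K : Type*} [Field K] {S : Set K}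
    (hS : S.Nontrivial) {a b c : K} (ha : a ≠ 0) {φ ψ : K → K}
    (hφ : ∀ w, φ w = a * w + b) (hψ : ∀ w, ψ w = a⁻¹ * w + a⁻¹ * c) :
    (∀ w ∈ S, 1 / (φ w + 1) = a⁻¹ * (1 / (ψ w + 1))) ↔ a = 1 ∧ c = b := by
  have clear_denominators (w : K) :
      1 / (φ w + 1) = a⁻¹ * (1 / (ψ w + 1)) ↔ a * w + (b + 1) = 1 * w + (c + a) := by
    have mul_ψ : a * (ψ w + 1) = 1 * w + (c + a) := by
      rw [hψ]
      field_simp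
      ring
    rw [one_div_eq_inv_mul_one_div_iff, mul_ψ, hφ, add_assoc]
  calc (∀ w ∈ S, 1 / (φ w + 1) = a⁻¹ * (1 / (ψ w + 1)))
      ↔ ∀ w ∈ S, a * w + (b + 1) = 1 * w + (c + a) := by simp only [clear_denominators]
    _ ↔ a = 1 ∧ b + 1 = c + a := forall_mem_affine_eq_iff hS
    _ ↔ a = 1 ∧ c = b := and_congr_right fun h ↦ by rw [h, add_left_inj, eq_comm]

theorem nontrivial_rightHalfPlane : {w : ℂ | 0 < w.re}.Nontrivial :=
  ⟨1, by simp, 2, by simp, by norm_num⟩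

theorem selfadjoint_kernel_reduction (a : ℝ) (ha : 0 < a) (b : ℂ) (hb : 0 ≤ b.re)
    (φ ψ : ℂ → ℂ)
    (hφ : ∀ w, φ w = (a : ℂ) * w + b)
    (hψ : ∀ w, ψ w = (a : ℂ)⁻¹ * w + (a : ℂ)⁻¹ * (starRingEnd ℂ) b) :
    (∀ w : ℂ, 0 < w.re → 1 / (φ w + 1) = (a : ℂ)⁻¹ * (1 / (ψ w + 1))) ↔
      a = 1 ∧ b.im = 0 ∧ 0 ≤ b.re := by
  simpa only [Set.mem_ofPred_eq, ofReal_eq_one, conj_eq_iff_im, hb, and_true] using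
    selfadjoint_kernel_reduction_general nontrivial_rightHalfPlane (ofReal_ne_zero.2 ha.ne') hφ hψ
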